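/- Let δ̄ > 0 and let (u, v) ∈ S(δ̄) with associated convex domains Ω₁ and Ω₂ (each with nonempty interior and with 0 ∈ ∂Ω₁ ∩ ∂Ω₂). Then the left tangents satisfy L_{Ω₁}(0) · L_{Ω₂}(0) ≥ 0 and the right tangents satisfy R_{Ω₁}(0) · R_{Ω₂}(0) ≥ 0; equivalently, corresponding one-sided tangent directions of Ω₁ and Ω₂ at the origin are within angle π/2 of each other. -/

import Mathlib

noncomputable section

open MeasureTheory Metric Set
open scoped RealInnerProductSpace

abbrev R2 : Type := EuclideanSpace ℝ (Fin 2)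

/-- `p` is a subgradient of `f` at `x`. -/
def SubgradAt (f : R2 → ℝ) (x p : R2) : Prop :=
  ∀ y : R2, f x + ⟪p, y - x⟫ ≤ f y

/-- `ψ` is a (canonically extended) potential of the optimal transport between `U₁` and `U₂`:
it is convex on `ℝ²`, all its subgradients lie in `closure U₂`, and its gradient map pushes
the Lebesgue measure restricted to `U₁` forward to the Lebesgue measure restricted to `U₂`. -/
def IsOTPotential (U₁ U₂ : Set R2) (ψ : R2 → ℝ) : Prop :=
  ConvexOn ℝ Set.univ ψ ∧
  (∀ x p : R2, SubgradAt ψ x p → p ∈ closure U₂) ∧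
  MeasureTheory.Measure.map (fun x => gradient ψ x) (MeasureTheory.volume.restrict U₁) =
    MeasureTheory.volume.restrict U₂

/-- `S` is a centred section of `w` at `x₀` of height `h`:
`S = {w < w x₀ + p · (· - x₀) + h}` for a slope `p` chosen so that
the centre of mass of `S` is `x₀`. -/
def IsCentredSection (w : R2 → ℝ) (x₀ : R2) (h : ℝ) (S : Set R2) : Prop :=
  ∃ p : R2, S = {x : R2 | w x < w x₀ + ⟪p, x - x₀⟫ + h} ∧
    (∫ x in S, (x - x₀) ∂(MeasureTheory.volume)) = 0

/-- Dilation of `S` about `x₀` by factor `t`. -/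
def dilate (x₀ : R2) (t : ℝ) (S : Set R2) : Set R2 :=
  (fun x => x₀ + t • (x - x₀)) '' S

/-- The (closed) ellipse centred at `0` with half-axis `A` in unit direction `e` and
half-axis `B` in the orthogonal unit direction `f`. -/
def ellipse (e f : R2) (A B : ℝ) : Set R2 :=
  {x : R2 | (⟪x, e⟫ / A) ^ 2 + (⟪x, f⟫ / B) ^ 2 ≤ 1}

/-- `w` is an Alexandrov solution of `det D² w = χ_Ω` in `ℝ²`: the Lebesgue measure of the
subdifferential image of any Borel set `E` equals the Lebesgue measure of `E ∩ Ω`. -/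
def AlexandrovSol (w : R2 → ℝ) (Ω : Set R2) : Prop :=
  ∀ E : Set R2, MeasurableSet E →
    MeasureTheory.volume (⋃ x ∈ E, {p : R2 | SubgradAt w x p}) =
      MeasureTheory.volume (E ∩ Ω)

/-- Membership of the pair `(u, v)` in the normalized family `S(δ̄)`, together with the
associated data: the domains `Ω₁, Ω₂`, and, for each height `h ∈ (0,1]`, the ellipse
`E_h = ellipse (e h) (f h) (L h) (l h)` centred at `0` (long half-axis `L h` in unit
direction `e h`, short half-axis `l h` in the orthogonal unit direction `f h`, area `hπ`,
so `L h * l h = h`), whose perpendicular ellipse is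
`E_h^⊥ = ellipse (f h) (e h) (L h) (l h)`.  The eccentricity is `η_u(h) = L h / l h`. -/
def InSFamily (δb : ℝ) (u v : R2 → ℝ) (Ω₁ Ω₂ : Set R2)
    (L l : ℝ → ℝ) (e f : ℝ → R2) : Prop :=
  ConvexOn ℝ Set.univ u ∧ ConvexOn ℝ Set.univ v ∧
  Convex ℝ Ω₁ ∧ Convex ℝ Ω₂ ∧
  (interior Ω₁).Nonempty ∧ (interior Ω₂).Nonempty ∧
  (0 : R2) ∈ frontier Ω₁ ∧ (0 : R2) ∈ frontier Ω₂ ∧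
  (fun x => gradient u x) '' Ω₁ = Ω₂ ∧ (fun y => gradient v y) '' Ω₂ = Ω₁ ∧
  AlexandrovSol u Ω₁ ∧ u 0 = 0 ∧ SubgradAt u 0 0 ∧
  AlexandrovSol v Ω₂ ∧ v 0 = 0 ∧ SubgradAt v 0 0 ∧
  (∀ y ∈ Ω₂, v y = ⨆ x : R2, (⟪x, y⟫ - u x)) ∧
  L 1 = 1 ∧ l 1 = 1 ∧
  (∀ h : ℝ, h ∈ Set.Ioc (0 : ℝ) 1 →
    ‖e h‖ = 1 ∧ ‖f h‖ = 1 ∧ ⟪e h, f h⟫ = 0 ∧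
    0 < l h ∧ l h ≤ L h ∧ L h * l h = h ∧
    (∃ S : Set R2, IsCentredSection u 0 h S ∧
      (∃ xh : R2, (fun z => xh + δb • z) '' ellipse (e h) (f h) (L h) (l h) ⊆ Ω₁ ∩ S) ∧
      S ⊆ (fun z => δb⁻¹ • z) '' ellipse (e h) (f h) (L h) (l h)) ∧
    (∃ S : Set R2, IsCentredSection v 0 h S ∧
      (∃ yh : R2, (fun z => yh + δb • z) '' ellipse (f h) (e h) (L h) (l h) ⊆ Ω₂ ∩ S) ∧
      S ⊆ (fun z => δb⁻¹ • z) '' ellipse (f h) (e h) (L h) (l h)))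

/-- `z ↦ t • x` cone over `Ω` with vertex `0` (closed): the tangent cone of `Ω` at `0`. -/
def tangentConeZero (Ω : Set R2) : Set R2 :=
  closure {y : R2 | ∃ t : ℝ, 0 ≤ t ∧ ∃ x ∈ Ω, y = t • x}

/-- The planar cross product (determinant) of two vectors. -/
def det2 (a b : R2) : ℝ := a 0 * b 1 - a 1 * b 0

/-- `r` is the unit direction of the right tangent ray of `∂Ω` at `0`:
it lies in the tangent cone of `Ω` at `0` and the whole tangent cone lies
(weakly) counterclockwise from it. -/
def IsRightTangent (Ω : Set R2) (r : R2) : Prop :=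
  ‖r‖ = 1 ∧ r ∈ tangentConeZero Ω ∧ ∀ x ∈ tangentConeZero Ω, 0 ≤ det2 r x

/-- `l` is the unit direction of the left tangent ray of `∂Ω` at `0`:
it lies in the tangent cone of `Ω` at `0` and the whole tangent cone lies
(weakly) clockwise from it. -/
def IsLeftTangent (Ω : Set R2) (l : R2) : Prop :=
  ‖l‖ = 1 ∧ l ∈ tangentConeZero Ω ∧ ∀ x ∈ tangentConeZero Ω, det2 l x ≤ 0

/-- The open cone of direction `e` and opening angle `θ`. -/
def cone2 (e : R2) (θ : ℝ) : Set R2 :=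
  {y : R2 | ∃ lam : ℝ, 0 < lam ∧ ∃ w : R2, ‖w‖ = 1 ∧
    InnerProductGeometry.angle w e < θ ∧ y = lam • w}

section ConvexCalculus

open Filter Topology

variable {E : Type*} [NormedAddCommGroup E]

theorem hasDerivAt_comp_line [InnerProductSpace ℝ E] [CompleteSpace E] {w : E → ℝ} {x : E}
    (hw : DifferentiableAt ℝ w x) (d : E) :
    HasDerivAt (fun t : ℝ => w (x + t • d)) ⟪gradient w x, d⟫ 0 := by
  have hline : HasDerivAt (fun t : ℝ => x + t • d) d 0 := by
    simpa using ((hasDerivAt_id (0 : ℝ)).smul_const d).const_add x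
  have hw' : HasFDerivAt w (fderiv ℝ w x) (x + (0 : ℝ) • d) := by
    simpa using hw.hasFDerivAt
  have h := hw'.comp_hasDerivAt (0 : ℝ) hline
  rwa [← toDual_gradient, InnerProductSpace.toDual_apply_apply] at h

theorem ConvexOn.comp_line [NormedSpace ℝ E] {w : E → ℝ} (hw : ConvexOn ℝ univ w) (x d : E) :
    ConvexOn ℝ univ (fun t : ℝ => w (x + t • d)) := by
  have h := hw.comp_affineMap (AffineMap.lineMap x (x + d) : ℝ →ᵃ[ℝ] E)
  simpa [Function.comp_def, AffineMap.lineMap_apply, add_comm] using h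

/-- The gradient inequality for a convex function at a point of differentiability. -/
theorem ConvexOn.add_inner_gradient_le [InnerProductSpace ℝ E] [CompleteSpace E] {w : E → ℝ}
    (hw : ConvexOn ℝ univ w) {x : E} (hd : DifferentiableAt ℝ w x) (y : E) :
    w x + ⟪gradient w x, y - x⟫ ≤ w y := by
  have h := (hw.comp_line x (y - x)).le_slope_of_hasDerivAt (mem_univ 0) (mem_univ 1)
    zero_lt_one (hasDerivAt_comp_line hd (y - x))
  simp only [slope_def_field, one_smul, zero_smul, add_zero, add_sub_cancel, sub_zero, div_one] at h
  linarith

theorem exists_lt_of_inner_gradient_neg [InnerProductSpace ℝ E] [CompleteSpace E] {w : E → ℝ}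
    {x d : E} (hd : ⟪gradient w x, d⟫ < 0) : ∃ s : ℝ, 0 < s ∧ w (x + s • d) < w x := by
  have hw : DifferentiableAt ℝ w x := by
    by_contra h
    simp [gradient_eq_zero_of_not_differentiableAt h] at hd
  by_contra! hmin
  refine absurd (ge_of_tendsto (hasDerivAt_comp_line hw d).tendsto_slope_zero_right ?_)
    (not_le.2 hd)
  filter_upwards [self_mem_nhdsWithin] with t ht
  have := hmin t ht
  simp only [zero_add, zero_smul, add_zero, smul_eq_mul]
  exact mul_nonneg (inv_nonneg.2 (le_of_lt ht)) (by linarith)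

/-- A finite convex function on a finite-dimensional space is differentiable on a dense set. -/
theorem ConvexOn.dense_differentiableAt [NormedSpace ℝ E] [FiniteDimensional ℝ E] {w : E → ℝ}
    (hw : ConvexOn ℝ univ w) : Dense {x | DifferentiableAt ℝ w x} := by
  borelize E
  rw [dense_iff_inter_open]
  rintro O hO ⟨x, hx⟩
  obtain ⟨K, t, ht, hK⟩ := hw.locallyLipschitz x
  have hae := hK.ae_differentiableWithinAt_of_mem (μ := Measure.addHaar)
  obtain ⟨z, hz, hzO⟩ := (Measure.dense_of_ae hae).inter_open_nonempty (O ∩ interior t)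
    (hO.inter isOpen_interior) ⟨x, hx, mem_interior_iff_mem_nhds.2 ht⟩
  exact ⟨z, hz.1, (hzO (interior_subset hz.2)).differentiableAt
    (mem_interior_iff_mem_nhds.1 hz.2)⟩

theorem ConvexOn.continuous_of_univ [NormedSpace ℝ E] [FiniteDimensional ℝ E] {w : E → ℝ}
    (hw : ConvexOn ℝ univ w) : Continuous w :=
  hw.locallyLipschitz.continuous

/-- A convex function whose gradients on an open set have nonnegative component along `m`
does not decrease when moving from that set in direction `m`. -/
theorem ConvexOn.le_add_smul_of_inner_gradient_nonneg [InnerProductSpace ℝ E]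
    [FiniteDimensional ℝ E] {w : E → ℝ} (hw : ConvexOn ℝ univ w) {U : Set E} (hU : IsOpen U)
    {m : E} (hm : ∀ x ∈ U, 0 ≤ ⟪m, gradient w x⟫) {x : E} (hx : x ∈ U) {t : ℝ} (ht : 0 ≤ t) :
    w x ≤ w (x + t • m) := by
  have hcont := hw.continuous_of_univ
  by_contra! hlt
  obtain ⟨z, ⟨hzU, hz⟩, hzd⟩ := hw.dense_differentiableAt.inter_open_nonempty
    (U ∩ {z | w (z + t • m) < w z})
    (hU.inter (isOpen_lt (hcont.comp (continuous_id.add continuous_const)) hcont)) ⟨x, hx, hlt⟩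
  have h := hw.add_inner_gradient_le hzd (z + t • m)
  rw [add_sub_cancel_left, real_inner_smul_right, real_inner_comm] at h
  have := mul_nonneg ht (hm z hzU)
  have hz' : w (z + t • m) < w z := hz
  linarith

/-- A convex function that decreases at some point ahead in direction `d` does not decrease
in direction `-d`. -/
theorem ConvexOn.le_sub_smul_of_lt [NormedSpace ℝ E] {w : E → ℝ} (hw : ConvexOn ℝ univ w)
    {x d : E} {s t : ℝ} (hs : 0 < s) (hlt : w (x + s • d) < w x) (ht : 0 ≤ t) :
    w x ≤ w (x - t • d) := by
  have hst : 0 < s + t := by linarith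
  have h := hw.2 (mem_univ (x + s • d)) (mem_univ (x - t • d))
    (div_nonneg ht hst.le) (div_nonneg hs.le hst.le) (by field_simp; ring)
  have hx : (t / (s + t)) • (x + s • d) + (s / (s + t)) • (x - t • d) = x := by
    have h1 : t / (s + t) + s / (s + t) = 1 := by field_simp; ring
    have h2 : t / (s + t) * s - s / (s + t) * t = 0 := by ring
    calc _ = (t / (s + t) + s / (s + t)) • x
          + (t / (s + t) * s - s / (s + t) * t) • d := by module
      _ = x := by rw [h1, h2]; simp
  rw [hx, smul_eq_mul, smul_eq_mul, div_mul_eq_mul_div, div_mul_eq_mul_div, ← add_div,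
    le_div_iff₀ hst] at h
  nlinarith [mul_le_mul_of_nonneg_left hlt.le ht]

end ConvexCalculus

/-- A potential `u` whose Legendre transform on `Ω₂` is a convex function `v`, both minimal at
`0` with value `0`, is positive in the interior of the convex set `∇v(Ω₂)`. -/
theorem potential_pos_of_mem_interior {u v : R2 → ℝ} {Ω₁ Ω₂ : Set R2}
    (hv : ConvexOn ℝ univ v) (hΩ : Convex ℝ Ω₁)
    (h0 : (0 : R2) ∈ frontier Ω₁) (hgrad : (fun y => gradient v y) '' Ω₂ = Ω₁)
    (hu0 : u 0 = 0) (humin : SubgradAt u 0 0) (hv0 : v 0 = 0) (hvmin : SubgradAt v 0 0)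
    (hleg : ∀ y ∈ Ω₂, v y = ⨆ x : R2, (⟪x, y⟫ - u x)) {x : R2} (hx : x ∈ interior Ω₁) :
    0 < u x := by
  have hunn : ∀ z, 0 ≤ u z := fun z => by simpa [hu0] using humin z
  have hvnn : ∀ z, 0 ≤ v z := fun z => by simpa [hv0] using hvmin z
  by_contra! hux
  set x' : R2 := (1 / 2 : ℝ) • x with hx'
  have hx'mem : x' ∈ interior Ω₁ := by
    have h := hΩ.combo_interior_closure_mem_interior hx (frontier_subset_closure h0)
      (a := 1 / 2) (b := 1 / 2) (by norm_num) (by norm_num) (by norm_num)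
    simpa [hx'] using h
  have hx'0 : x' ≠ 0 := fun h => h0.2 (h ▸ hx'mem)
  obtain ⟨y, hy, hyx⟩ := hgrad.symm ▸ interior_subset hx'mem
  have hyx : gradient v y = x' := hyx
  have hd : DifferentiableAt ℝ v y := by
    by_contra h
    exact hx'0 (hyx ▸ gradient_eq_zero_of_not_differentiableAt h)
  have hvy : v y ≤ 0 := by
    by_cases hb : BddAbove (range fun z : R2 => ⟪z, y⟫ - u z)
    · have h1 := le_ciSup hb x
      rw [← hleg y hy] at h1
      have h2 := hv.add_inner_gradient_le hd 0
      rw [hyx, hv0, zero_sub, inner_neg_right, hx', real_inner_smul_left] at h2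
      linarith
    · rw [hleg y hy, Real.iSup_of_not_bddAbove hb]
  have hmin : IsLocalMin v y := Filter.Eventually.of_forall fun z => hvy.trans (hvnn z)
  apply hx'0
  rw [← hyx, gradient, hmin.fderiv_eq_zero, map_zero]

/-- The monotonicity argument: a gradient map cannot carry the tangent direction `r` of `Ω₁`
(with inner normal `n`) to a tangent direction with inner normal `m = a • n - b • r`, `a < 0`. -/
theorem false_of_opposite_tangents {u : R2 → ℝ} {Ω₁ Ω₂ : Set R2}
    (hu : ConvexOn ℝ univ u) (hu0 : u 0 = 0) (hΩ : Convex ℝ Ω₁)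
    (hint : (interior Ω₁).Nonempty)
    (hpos : ∀ x ∈ interior Ω₁, 0 < u x)
    (hgrad : (fun x => gradient u x) '' Ω₁ = Ω₂)
    {r n m : R2} {a b : ℝ} (ha : a < 0) (hm : m = a • n - b • r)
    (hdec : ∀ x : R2, x = ⟪r, x⟫ • r + ⟪n, x⟫ • n) (hn : ⟪n, n⟫ = 1)
    (hnΩ : ∀ x ∈ Ω₁, 0 ≤ ⟪n, x⟫) (hmΩ : ∀ y ∈ Ω₂, 0 ≤ ⟪m, y⟫)
    (hx : ∃ x ∈ Ω₁, 0 < ⟪r + (b / a) • n, x⟫) (hy : ∃ y ∈ Ω₂, 0 < ⟪-r, y⟫) : False := by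
  have hcont := hu.continuous_of_univ
  have hmono : ∀ x ∈ interior Ω₁, ∀ t : ℝ, 0 ≤ t → u x ≤ u (x + t • m) := fun x hx t ht =>
    hu.le_add_smul_of_inner_gradient_nonneg isOpen_interior
      (fun z hz => hmΩ _ (hgrad ▸ mem_image_of_mem _ (interior_subset hz))) hx ht
  have hdense : Ω₁ ⊆ closure (interior Ω₁) := by
    rw [hΩ.closure_interior_eq_closure_of_nonempty_interior hint]
    exact subset_closure
  -- a small step from an interior point stays in the interior
  have hstep : ∀ x ∈ interior Ω₁, ∀ d : R2, ∃ t : ℝ, 0 < t ∧ t < 1 ∧ x + t • d ∈ interior Ω₁ := by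
    intro x hx d
    have hc : Filter.Tendsto (fun t : ℝ => x + t • d) (nhdsWithin 0 (Ioi 0)) (nhds x) := by
      have : Continuous fun t : ℝ => x + t • d := by fun_prop
      simpa using (this.tendsto 0).mono_left nhdsWithin_le_nhds
    obtain ⟨t, ht, ht'⟩ := ((hc.eventually (isOpen_interior.mem_nhds hx)).and
      (Ioo_mem_nhdsGT (zero_lt_one' ℝ))).exists
    exact ⟨t, ht'.1, ht'.2, ht⟩
  have hnpos : ∀ x ∈ interior Ω₁, 0 < ⟪n, x⟫ := by
    intro x hx
    obtain ⟨t, ht, -, htx⟩ := hstep x hx (-n)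
    have := hnΩ _ (interior_subset htx)
    rw [inner_add_right, real_inner_smul_right, inner_neg_right, hn] at this
    linarith
  -- `u` is strictly decreasing (resp. increasing) in direction `r`
  set P : Set R2 := {x | ∃ s : ℝ, 0 < s ∧ u (x + s • r) < u x} with hP
  set Q : Set R2 := {x | ∃ s : ℝ, 0 < s ∧ u (x - s • r) < u x} with hQ
  have hPo : IsOpen P := by
    have : P = ⋃ s : ℝ, ⋃ _ : 0 < s, {x | u (x + s • r) < u x} := by ext; simp [hP]
    rw [this]
    exact isOpen_iUnion fun s => isOpen_iUnion fun _ => isOpen_lt (by fun_prop) hcont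
  have hQo : IsOpen Q := by
    have : Q = ⋃ s : ℝ, ⋃ _ : 0 < s, {x | u (x - s • r) < u x} := by ext; simp [hQ]
    rw [this]
    exact isOpen_iUnion fun s => isOpen_iUnion fun _ => isOpen_lt (by fun_prop) hcont
  have hPQ : Disjoint P Q := by
    rw [Set.disjoint_left]
    rintro x ⟨s, hs, hsx⟩ ⟨t, ht, htx⟩
    exact absurd (hu.le_sub_smul_of_lt hs hsx ht.le) (not_le.2 htx)
  have hcover : interior Ω₁ ⊆ P ∪ Q := by
    intro x hx
    by_contra hnot
    simp only [hP, hQ, mem_union, mem_ofPred_eq, not_or, not_exists, not_and, not_lt] at hnot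
    have hline : ∀ c : ℝ, u x ≤ u (x + c • r) := by
      intro c
      rcases lt_trichotomy c 0 with hc | rfl | hc
      · simpa using hnot.2 (-c) (by linarith)
      · simp
      · exact hnot.1 c hc
    obtain ⟨t, ht, -, hz⟩ := hstep x hx (-m)
    have hzx : u (x + t • -m) ≤ u x := by simpa using hmono _ hz t ht.le
    have hx2 := hnpos x hx
    set q := ⟪n, x⟫ with hq
    have hta : 0 < q - t * a := by nlinarith
    set lam := q / (q - t * a) with hlam
    have hlam0 : 0 < lam := div_pos hx2 hta
    have hlam1 : lam < 1 := (div_lt_one hta).2 (by nlinarith)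
    have hlamq : lam * (q - t * a) = q := div_mul_cancel₀ _ hta.ne'
    have hpt : lam • (x + t • -m) = x + ((lam - 1) * ⟪r, x⟫ + lam * t * b) • r := by
      have e1 : lam • (x + t • -m) - x - ((lam - 1) * ⟪r, x⟫ + lam * t * b) • r
          = (lam - 1) • (x - (⟪r, x⟫ • r + q • n)) + (lam * (q - t * a) - q) • n := by
        rw [hm]; module
      rw [← hdec x, hlamq] at e1
      rw [← sub_eq_zero, ← sub_sub]
      simpa using e1
    have hconv := hu.2 (mem_univ (x + t • -m)) (mem_univ 0) hlam0.le
      (sub_nonneg.2 hlam1.le) (by ring)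
    rw [smul_zero, add_zero, hu0, smul_zero, add_zero, hpt, smul_eq_mul] at hconv
    have := hline ((lam - 1) * ⟪r, x⟫ + lam * t * b)
    have := mul_le_mul_of_nonneg_left hzx hlam0.le
    nlinarith [hpos x hx]
  rcases hΩ.interior.isPreconnected.subset_or_subset hPo hQo hPQ hcover with hall | hall
  · obtain ⟨x₁, hx₁, hx₁'⟩ := hx
    obtain ⟨x, hxφ, hx⟩ := mem_closure_iff.1 (hdense hx₁) {x | 0 < ⟪r + (b / a) • n, x⟫}
      (isOpen_lt continuous_const (by fun_prop)) hx₁'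
    have hxφ : 0 < ⟪r + (b / a) • n, x⟫ := hxφ
    set α := ⟪r + (b / a) • n, x⟫ with hα
    have hβ : 0 < -⟪n, x⟫ / a := div_pos_of_neg_of_neg (by linarith [hnpos x hx]) ha
    obtain ⟨t, ht, ht1, hz⟩ := hstep x hx (-(α • r))
    obtain ⟨s, hs, hsx⟩ := hall hx
    have h1 := hu.le_sub_smul_of_lt hs hsx (mul_pos ht hxφ).le
    have h2 := hmono _ hz (t * (-⟪n, x⟫ / a)) (mul_pos ht hβ).le
    have hpt : x + t • -(α • r) + (t * (-⟪n, x⟫ / a)) • m = (1 - t) • x := by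
      have e1 : x + t • -(α • r) + (t * (-⟪n, x⟫ / a)) • m - (1 - t) • x
          = t • (x - (⟪r, x⟫ • r + ⟪n, x⟫ • n)) := by
        have e2 : -⟪n, x⟫ / a * a = -⟪n, x⟫ := div_mul_cancel₀ _ ha.ne
        have e3 : α = ⟪r, x⟫ + (b / a) * ⟪n, x⟫ := by
          rw [hα, inner_add_left, real_inner_smul_left]
        have e4 : (-⟪n, x⟫ / a) • m = (-⟪n, x⟫) • n + ((b / a) * ⟪n, x⟫) • r := by
          rw [hm, smul_sub, smul_smul, smul_smul, e2, sub_eq_add_neg, ← neg_smul]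
          congr 2
          ring
        rw [mul_smul, e4, e3]
        module
      rw [← hdec x, sub_self, smul_zero] at e1
      exact sub_eq_zero.1 e1
    have hconv := hu.2 (mem_univ x) (mem_univ 0) (sub_nonneg.2 ht1.le) ht.le (by ring)
    rw [smul_zero, add_zero, hu0, smul_zero, add_zero, smul_eq_mul, ← hpt] at hconv
    rw [mul_smul, sub_eq_add_neg, ← smul_neg] at h1
    nlinarith [hpos x hx]
  · obtain ⟨y, hy, hyr⟩ := hy
    obtain ⟨z, hz, rfl⟩ := hgrad.symm ▸ hy
    have hzP : z ∈ P := by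
      apply exists_lt_of_inner_gradient_neg
      rw [inner_neg_left, real_inner_comm] at hyr
      linarith
    obtain ⟨z', hz'P, hz'⟩ := mem_closure_iff.1 (hdense hz) P hPo hzP
    exact Set.disjoint_left.1 hPQ hz'P (hall hz')

theorem exists_inner_pos_of_mem_tangentConeZero {Ω : Set R2} {r w : R2}
    (hr : r ∈ tangentConeZero Ω) (hw : 0 < ⟪w, r⟫) : ∃ x ∈ Ω, 0 < ⟪w, x⟫ := by
  obtain ⟨y, hy, t, ht, x, hx, rfl⟩ := mem_closure_iff.1 hr {x | 0 < ⟪w, x⟫}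
    (isOpen_lt continuous_const (by fun_prop)) hw
  have hy : 0 < ⟪w, t • x⟫ := hy
  rw [real_inner_smul_right] at hy
  exact ⟨x, hx, pos_of_mul_pos_right hy ht⟩

theorem subset_tangentConeZero (Ω : Set R2) : Ω ⊆ tangentConeZero Ω := fun x hx =>
  subset_closure ⟨1, zero_le_one, x, hx, by simp⟩

/-- Rotation by a right angle, counterclockwise. -/
def rotate2 (a : R2) : R2 := !₂[-a 1, a 0]

theorem inner_eq_coords (a b : R2) : ⟪a, b⟫ = a 0 * b 0 + a 1 * b 1 := by
  simp [PiLp.inner_apply, Fin.sum_univ_two, mul_comm]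

theorem inner_rotate2 (a b : R2) : ⟪rotate2 a, b⟫ = det2 a b := by
  simp [inner_eq_coords, rotate2, det2]
  ring

/-- Weak obliqueness for one side, `σ = 1` for right tangents and `σ = -1` for left tangents. -/
theorem inner_tangents_nonneg {u : R2 → ℝ} {Ω₁ Ω₂ : Set R2}
    (hu : ConvexOn ℝ univ u) (hu0 : u 0 = 0) (hΩ : Convex ℝ Ω₁)
    (hint : (interior Ω₁).Nonempty)
    (hpos : ∀ x ∈ interior Ω₁, 0 < u x)
    (hgrad : (fun x => gradient u x) '' Ω₁ = Ω₂)
    {σ : ℝ} (hσ : σ * σ = 1) {r₁ r₂ : R2} (hr₁ : ‖r₁‖ = 1)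
    (hmem₁ : r₁ ∈ tangentConeZero Ω₁) (hmem₂ : r₂ ∈ tangentConeZero Ω₂)
    (hdet₁ : ∀ x ∈ tangentConeZero Ω₁, 0 ≤ σ * det2 r₁ x)
    (hdet₂ : ∀ x ∈ tangentConeZero Ω₂, 0 ≤ σ * det2 r₂ x) :
    0 ≤ ⟪r₁, r₂⟫ := by
  by_contra! hneg
  have hunit : r₁ 0 * r₁ 0 + r₁ 1 * r₁ 1 = 1 := by
    rw [← inner_eq_coords, real_inner_self_eq_norm_sq, hr₁, one_pow]
  refine false_of_opposite_tangents (r := r₁) (n := σ • rotate2 r₁) (m := σ • rotate2 r₂)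
    (b := σ * det2 r₁ r₂) hu hu0 hΩ hint hpos hgrad hneg ?_ ?_ ?_ ?_ ?_ ?_ ?_
  · rw [inner_eq_coords]
    ext i
    fin_cases i
    · simp [rotate2, det2]
      linear_combination (σ * r₂ 1) * hunit
    · simp [rotate2, det2]
      linear_combination (-σ * r₂ 0) * hunit
  · intro x
    rw [real_inner_smul_left, inner_rotate2, inner_eq_coords]
    ext i
    fin_cases i
    · simp [rotate2, det2]
      linear_combination (-x 0) * hunit + (r₁ 1 * (r₁ 0 * x 1 - r₁ 1 * x 0)) * hσ
    · simp [rotate2, det2]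
      linear_combination (-x 1) * hunit - (r₁ 0 * (r₁ 0 * x 1 - r₁ 1 * x 0)) * hσ
  · rw [real_inner_smul_left, real_inner_smul_right, inner_rotate2]
    simp [rotate2, det2]
    linear_combination hunit + (r₁ 0 * r₁ 0 + r₁ 1 * r₁ 1) * hσ
  · intro x hx
    rw [real_inner_smul_left, inner_rotate2]
    exact hdet₁ x (subset_tangentConeZero _ hx)
  · intro x hx
    rw [real_inner_smul_left, inner_rotate2]
    exact hdet₂ x (subset_tangentConeZero _ hx)
  · apply exists_inner_pos_of_mem_tangentConeZero hmem₁
    have hd : det2 r₁ r₁ = 0 := by simp [det2]; ring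
    rw [inner_add_left, real_inner_smul_left, real_inner_smul_left, inner_rotate2, hd,
      inner_eq_coords, hunit]
    norm_num
  · apply exists_inner_pos_of_mem_tangentConeZero hmem₂
    rw [inner_neg_left]
    linarith

/-- weak obliqueness for pairs in `S(δ̄)`: at the origin, corresponding
one-sided tangents of `Ω₁` and `Ω₂` make a nonnegative inner product (angle at most `π/2`). -/
theorem stmt_10 (δb : ℝ) (hδb : 0 < δb)
    (u v : R2 → ℝ) (Ω₁ Ω₂ : Set R2) (L l : ℝ → ℝ) (e f : ℝ → R2)
    (hmem : InSFamily δb u v Ω₁ Ω₂ L l e f)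
    (L₁ L₂ R₁ R₂ : R2)
    (hL₁ : IsLeftTangent Ω₁ L₁) (hL₂ : IsLeftTangent Ω₂ L₂)
    (hR₁ : IsRightTangent Ω₁ R₁) (hR₂ : IsRightTangent Ω₂ R₂) :
    0 ≤ ⟪L₁, L₂⟫ ∧ 0 ≤ ⟪R₁, R₂⟫ := by
  obtain ⟨hu, hv, hΩ₁, -, hint, -, h0, -, hgu, hgv, -, hu0, humin, -, hv0, hvmin, hleg, -⟩ := hmem
  have hpos : ∀ x ∈ interior Ω₁, 0 < u x := fun x hx =>
    potential_pos_of_mem_interior hv hΩ₁ h0 hgv hu0 humin hv0 hvmin hleg hx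
  obtain ⟨hL₁n, hL₁m, hL₁d⟩ := hL₁
  obtain ⟨-, hL₂m, hL₂d⟩ := hL₂
  obtain ⟨hR₁n, hR₁m, hR₁d⟩ := hR₁
  obtain ⟨-, hR₂m, hR₂d⟩ := hR₂
  constructor
  · exact inner_tangents_nonneg hu hu0 hΩ₁ hint hpos hgu (σ := -1) (by norm_num) hL₁n hL₁m hL₂m
      (fun x hx => by linarith [hL₁d x hx]) (fun x hx => by linarith [hL₂d x hx])
  · exact inner_tangents_nonneg hu hu0 hΩ₁ hint hpos hgu (σ := 1) (by norm_num) hR₁n hR₁m hR₂m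
      (fun x hx => by linarith [hR₁d x hx]) (fun x hx => by linarith [hR₂d x hx])
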